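/- Let N ≥ 1 and consider the ℤ_N toric code anyon theory on A = ZMod N × ZMod N with braiding B_TC. For every k ∈ ZMod N, the diagonal anyon (k,k) braids trivially with all diagonal anyons (i.e. B_TC((k,k),(l,l)) = 1 for all l ∈ ZMod N) if and only if k = 0, or N is even and k is the image of N/2 in ZMod N. In particular, the diagonal subtheory ℤ_N^(1) (generated by em) contains a nonzero transparent anyon if and only if N is even, i.e. it is modular if and only if N is odd. -/

import Mathlib

/-- The braiding associated to an exchange-statistics function `θ`:
`B(a,b) = θ(a+b) · θ(a)⁻¹ · θ(b)⁻¹`. -/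
noncomputable def braiding {A : Type*} [AddCommGroup A] (θ : A → ℂ) (a b : A) : ℂ :=
  θ (a + b) * (θ a)⁻¹ * (θ b)⁻¹

/-- An exchange-statistics function (Abelian anyon theory) on an additive abelian
group `A`: a unimodular map `θ : A → ℂ` with `θ 0 = 1`, `θ (-a) = θ a`, whose
associated braiding is biadditive. -/
structure IsExchangeStats {A : Type*} [AddCommGroup A] (θ : A → ℂ) : Prop where
  abs_eq_one : ∀ a, ‖θ a‖ = 1
  map_zero : θ 0 = 1
  map_neg : ∀ a, θ (-a) = θ a
  braiding_add_left : ∀ a a' b, braiding θ (a + a') b = braiding θ a b * braiding θ a' b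
  braiding_add_right : ∀ a b b', braiding θ a (b + b') = braiding θ a b * braiding θ a b'

/-- A Lagrangian subgroup of an Abelian anyon theory `(A, θ)`. -/
def IsLagrangian {A : Type*} [AddCommGroup A] (θ : A → ℂ) (L : AddSubgroup A) : Prop :=
  (∀ c ∈ L, θ c = 1) ∧ (∀ c ∈ L, ∀ c' ∈ L, braiding θ c c' = 1) ∧
  (∀ a : A, a ∉ L → ∃ c ∈ L, braiding θ a c ≠ 1)

/-- The exchange statistics of the `ℤ_N` toric code anyon theory on
`ZMod N × ZMod N`: `θ_TC(e,m) = exp(2πi·e·m/N)`. -/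
noncomputable def thetaTC (N : ℕ) (a : ZMod N × ZMod N) : ℂ :=
  Complex.exp (2 * Real.pi * Complex.I * (a.1.val : ℂ) * (a.2.val : ℂ) / (N : ℂ))

/-!
Write `θ_TC = ψ ∘ q`, where `ψ` is the standard additive character of `ℤ/N` and `q(e, m) = e·m`.
The braiding of `ψ ∘ q` is `ψ` of the polar form of `q`, so `(k, k)` and `(l, l)` braid to
`ψ(2kl)`. As `ψ` is primitive, this is `1` for all `l` exactly when `2k = 0`.
-/

open QuadraticMap (polar)

theorem braiding_addChar_comp {A M : Type*} [AddCommGroup A] [AddCommGroup M]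
    (ψ : AddChar M ℂ) (q : A → M) (a b : A) :
    braiding (fun x ↦ ψ (q x)) a b = ψ (polar q a b) := by
  simp only [braiding, polar, AddChar.map_sub_eq_div, div_eq_mul_inv]

theorem forall_addChar_mul_eq_one_iff {R M : Type*} [CommRing R] [CommMonoid M]
    {ψ : AddChar R M} (hψ : ψ.IsPrimitive) {r : R} :
    (∀ s, ψ (r * s) = 1) ↔ r = 0 := by
  constructor
  · intro h
    by_contra hr
    exact hψ hr (DFunLike.ext _ _ h)
  · rintro rfl s
    rw [zero_mul, AddChar.map_zero_eq_one]

theorem polar_fst_mul_snd {R : Type*} [NonUnitalNonAssocRing R] (a b : R × R) :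
    polar (fun x : R × R ↦ x.1 * x.2) a b = a.1 * b.2 + b.1 * a.2 := by
  simp only [polar, Prod.fst_add, Prod.snd_add, add_mul, mul_add]
  abel

theorem zmod_two_mul_eq_zero_iff {N : ℕ} {k : ZMod N} :
    2 * k = 0 ↔ k = 0 ∨ (Even N ∧ k = ((N / 2 : ℕ) : ZMod N)) := by
  constructor
  · intro h
    have hneg : -k = k := by rwa [neg_eq_iff_add_eq_zero, ← two_mul]
    refine (k.neg_eq_self_iff.mp hneg).imp_right fun hval ↦ ?_
    obtain rfl | hN := eq_or_ne N 0
    · simpa using hval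
    · have : NeZero N := ⟨hN⟩
      have hhalf : N / 2 = k.val := by lia
      exact ⟨even_iff_two_dvd.mpr ⟨k.val, hval.symm⟩, by rw [hhalf, ZMod.natCast_zmod_val]⟩
  · rintro (rfl | ⟨hN, rfl⟩)
    · rw [mul_zero]
    · rw [← Nat.cast_ofNat, ← Nat.cast_mul, Nat.two_mul_div_two_of_even hN, ZMod.natCast_self]

section ToricCode

variable {N : ℕ} [NeZero N]

theorem thetaTC_eq_stdAddChar (a : ZMod N × ZMod N) :
    thetaTC N a = ZMod.stdAddChar (a.1 * a.2) := by
  have hmul : a.1 * a.2 = ((a.1.val * a.2.val : ℤ) : ZMod N) := by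
    simp only [Int.cast_mul, Int.cast_natCast, ZMod.natCast_zmod_val]
  rw [hmul, ZMod.stdAddChar_coe, thetaTC]
  push_cast
  rw [mul_assoc _ (a.1.val : ℂ)]

theorem braiding_thetaTC (a b : ZMod N × ZMod N) :
    braiding (thetaTC N) a b = ZMod.stdAddChar (a.1 * b.2 + b.1 * a.2) := by
  rw [funext thetaTC_eq_stdAddChar, braiding_addChar_comp, polar_fst_mul_snd]

theorem braiding_thetaTC_diag (k l : ZMod N) :
    braiding (thetaTC N) (k, k) (l, l) = ZMod.stdAddChar (2 * k * l) := by
  rw [braiding_thetaTC, mul_comm l k, ← two_mul, mul_assoc]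

end ToricCode

/-- A diagonal anyon `(k,k)` of the `ℤ_N` toric code braids trivially with all
diagonal anyons iff `k = 0`, or `N` is even and `k = N/2`.  Hence the `ℤ_N^(1)`
subtheory has a nonzero transparent anyon iff `N` is even. -/
theorem diag_transparent_iff (N : ℕ) [NeZero N] (k : ZMod N) :
    (∀ l : ZMod N, braiding (thetaTC N) (k, k) (l, l) = 1) ↔
      (k = 0 ∨ (Even N ∧ k = ((N / 2 : ℕ) : ZMod N))) := by
  simp only [braiding_thetaTC_diag]
  rw [forall_addChar_mul_eq_one_iff (ZMod.isPrimitive_stdAddChar N), zmod_two_mul_eq_zero_iff]
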